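/- Let a, b, c ≥ 0 and let P be a polynomial extension of Φ_{a,b,c}. Then for all complex numbers α, β, γ, P(α,…,α; β,…,β; γ,…,γ) = N_{a,b,c} · (α − β)^{ab} · (γ − β)^{bc} · (α − γ)^{ca}, where N_{a,b,c} is the number of semistandard Young tableaux of rectangular shape b × c with entries in {1,…,a+b} (equivalently, the number of plane partitions in an a × b × c box). -/

import Mathlib

/-- Eq. (2.6) of the paper: the explicit formula for the component of the O(1) loop model
ground state corresponding to three series of nested arches of sizes `a`, `b`, `c`. -/
noncomputable def Phi (a b c : ℕ) (α : Fin (b + c) → ℂ) (β : Fin (a + c) → ℂ)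
    (γ : Fin (a + b) → ℂ) : ℂ :=
  ∑ I ∈ Finset.powersetCard c (Finset.univ : Finset (Fin (b + c))),
    ((∏ i ∈ Iᶜ, ∏ j, (α i - β j)) * ∏ i ∈ I, ∏ k, (α i - γ k)) /
      ∏ i ∈ I, ∏ j ∈ Iᶜ, (α i - α j)

/-- A function `P : ℂ^{b+c} × ℂ^{a+c} × ℂ^{a+b} → ℂ` is a polynomial function if it is
given by the evaluation of a multivariate polynomial in all of the variables. -/
def IsPolyFun (a b c : ℕ)
    (P : (Fin (b + c) → ℂ) → (Fin (a + c) → ℂ) → (Fin (a + b) → ℂ) → ℂ) : Prop :=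
  ∃ p : MvPolynomial (Fin (b + c) ⊕ Fin (a + c) ⊕ Fin (a + b)) ℂ,
    ∀ α β γ, P α β γ = MvPolynomial.eval (Sum.elim α (Sum.elim β γ)) p

/-- Semistandard Young tableaux of rectangular shape `b × c` with entries in `{1, …, a+b}`:
rows weakly increasing, columns strictly increasing. -/
def IsRectSSYT (a b c : ℕ) (T : Fin b → Fin c → Fin (a + b)) : Prop :=
  (∀ (i : Fin b) (j j' : Fin c), j ≤ j' → T i j ≤ T i j') ∧
    (∀ (i i' : Fin b) (j : Fin c), i < i' → T i j < T i' j)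

instance (a b c : ℕ) : DecidablePred (IsRectSSYT a b c) := fun _ => by
  unfold IsRectSSYT; infer_instance

/-- `N_{a,b,c}`: the number of semistandard Young tableaux of rectangular shape `b × c`
with entries in `{1, …, a+b}`, equivalently the number of plane partitions in an
`a × b × c` box. -/
def NSSYT (a b c : ℕ) : ℕ :=
  (Finset.univ.filter (fun T : Fin b → Fin c → Fin (a + b) => IsRectSSYT a b c T)).card

/-- Binomial coefficients with an integer lower index, zero when that index is negative. -/
def intChoose (n : ℕ) (z : ℤ) : ℤ := if 0 ≤ z then (n.choose z.toNat : ℤ) else 0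

theorem intChoose_of_neg (n : ℕ) {z : ℤ} (hz : z < 0) : intChoose n z = 0 := by
  simp [intChoose, hz]

theorem intChoose_zero_left (z : ℤ) : intChoose 0 z = if z = 0 then 1 else 0 := by
  rcases lt_trichotomy z 0 with hz | rfl | hz
  · rw [intChoose_of_neg _ hz, if_neg hz.ne]
  · simp [intChoose]
  · rw [intChoose, if_pos hz.le, if_neg hz.ne', Nat.choose_eq_zero_of_lt (by omega)]
    rfl

theorem intChoose_succ (n : ℕ) (z : ℤ) :
    intChoose (n + 1) z = intChoose n z + intChoose n (z - 1) := by
  rcases lt_trichotomy z 0 with hz | rfl | hz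
  · rw [intChoose_of_neg _ hz, intChoose_of_neg _ hz, intChoose_of_neg _ (by omega), add_zero]
  · simp [intChoose]
  · obtain ⟨m, rfl⟩ : ∃ m : ℕ, z = m + 1 := ⟨(z - 1).toNat, by omega⟩
    have h : ((m : ℤ) + 1).toNat = m + 1 := by omega
    simp only [intChoose, h, if_pos hz.le, add_sub_cancel_right, Int.toNat_natCast,
      Nat.choose_succ_succ, Nat.cast_nonneg, if_true]
    push_cast
    ring

/-- The dual Jacobi–Trudi determinant at `(1, …, 1)` for the shape with column heights `h`. -/
def columnDet (n : ℕ) {c : ℕ} (h : Fin c → ℤ) : ℤ :=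
  Matrix.det (Matrix.of fun j k : Fin c => intChoose n (h j - j + k))

/-- Decrease by one the heights of the columns indexed by `E`. -/
def lowerColumns {c : ℕ} (h : Fin c → ℤ) (E : Finset (Fin c)) (j : Fin c) : ℤ :=
  if j ∈ E then h j - 1 else h j

theorem columnDet_succ (n : ℕ) {c : ℕ} (h : Fin c → ℤ) :
    columnDet (n + 1) h = ∑ E : Finset (Fin c), columnDet n (lowerColumns h E) := by
  have key := (Matrix.detRowAlternating (n := Fin c) (R := ℤ)).toMultilinearMap.map_add_univ
    (fun j (k : Fin c) => intChoose n (h j - 1 - j + k))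
    (fun j (k : Fin c) => intChoose n (h j - j + k))
  have hrow : columnDet (n + 1) h =
      (Matrix.detRowAlternating (n := Fin c) (R := ℤ)).toMultilinearMap
        ((fun j (k : Fin c) => intChoose n (h j - 1 - j + k)) +
          fun j (k : Fin c) => intChoose n (h j - j + k)) := by
    refine congrArg Matrix.det ?_
    ext j k
    simp only [Matrix.of_apply, intChoose_succ, Pi.add_apply]
    rw [add_comm]
    congr 2
    ring
  rw [hrow, key]
  refine Finset.sum_congr rfl fun E _ => congrArg Matrix.det ?_
  ext j k
  by_cases hj : j ∈ E <;> simp [lowerColumns, hj]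

theorem columnDet_lowerColumns_eq_zero (n : ℕ) {c : ℕ} {h : Fin c → ℤ} (hanti : Antitone h)
    (hnonneg : ∀ j, 0 ≤ h j) (E : Finset (Fin c))
    (hbad : ¬ (Antitone (lowerColumns h E) ∧ ∀ j, 0 ≤ lowerColumns h E j)) :
    columnDet n (lowerColumns h E) = 0 := by
  cases c with
  | zero => exact absurd ⟨Subsingleton.antitone _, fun j => j.elim0⟩ hbad
  | succ c =>
    by_cases hmono : Antitone (lowerColumns h E)
    · have hlast : lowerColumns h E (Fin.last c) < 0 := by
        by_contra hlast
        exact hbad ⟨hmono, fun j => (not_lt.1 hlast).trans (hmono (Fin.le_last j))⟩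
      refine Matrix.det_eq_zero_of_row_eq_zero (Fin.last c) fun k => intChoose_of_neg n ?_
      have := k.is_lt
      simp only [Fin.val_last]
      omega
    · rw [Fin.antitone_iff_succ_le] at hmono
      push Not at hmono
      obtain ⟨j, hj⟩ := hmono
      have hle := hanti (Fin.castSucc_lt_succ (i := j)).le
      have heq : lowerColumns h E j.succ = lowerColumns h E j.castSucc + 1 := by
        revert hj
        simp only [lowerColumns]
        split_ifs <;> omega
      refine Matrix.det_zero_of_row_eq (Fin.castSucc_lt_succ (i := j)).ne ?_
      ext k
      simp only [Matrix.of_apply, heq, Fin.val_succ, Fin.val_castSucc]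
      congr 1
      push_cast
      ring

theorem columnDet_zero_left {c : ℕ} {h : Fin c → ℤ} (hanti : Antitone h)
    (hnonneg : ∀ j, 0 ≤ h j) : columnDet 0 h = if h = 0 then 1 else 0 := by
  split_ifs with h0
  · subst h0
    rw [columnDet, ← Matrix.det_one (n := Fin c)]
    congr 1
    ext j k
    simp only [Matrix.of_apply, intChoose_zero_left, Matrix.one_apply, Pi.zero_apply]
    refine if_congr ?_ rfl rfl
    rw [Fin.ext_iff]
    omega
  · cases c with
    | zero => exact absurd (Subsingleton.elim _ _) h0
    | succ c =>
      have hpos : 0 < h 0 := by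
        by_contra hneg
        exact h0 (funext fun j => le_antisymm ((hanti (Fin.zero_le j)).trans (not_lt.1 hneg))
          (hnonneg j))
      refine Matrix.det_eq_zero_of_row_eq_zero 0 fun k => ?_
      rw [Matrix.of_apply, intChoose_zero_left, if_neg]
      simp only [Fin.val_zero]
      omega

/-- The fillings `T` of a `b × c` rectangle by `0, …, n` whose entries smaller than `n` form a
semistandard tableau of the straight shape with column heights `h`. -/
def IsPartialSSYT {b c : ℕ} (n : ℕ) (h : Fin c → ℤ) (T : Fin b → Fin c → ℕ) : Prop :=
  (Antitone h ∧ ∀ j, 0 ≤ h j) ∧ (∀ i j, T i j ≤ n) ∧ (∀ i j, T i j < n ↔ (i : ℤ) < h j) ∧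
    (∀ i j j', j ≤ j' → T i j ≤ T i j') ∧ ∀ i i' j, i < i' → T i j < n → T i j < T i' j

open Classical in
/-- The finset of all fillings satisfying `IsPartialSSYT n h`. -/
noncomputable def partialSSYT (b : ℕ) {c : ℕ} (n : ℕ) (h : Fin c → ℤ) :
    Finset (Fin b → Fin c → ℕ) :=
  (Fintype.piFinset fun _ => Fintype.piFinset fun _ => Finset.range (n + 1)).filter
    (IsPartialSSYT n h)

theorem mem_partialSSYT {b c n : ℕ} {h : Fin c → ℤ} {T : Fin b → Fin c → ℕ} :
    T ∈ partialSSYT b n h ↔ IsPartialSSYT n h T := by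
  simp only [partialSSYT, Finset.mem_filter, Fintype.mem_piFinset, Finset.mem_range,
    and_iff_right_iff_imp]
  exact fun hT i j => Nat.lt_succ_of_le (hT.2.1 i j)

theorem lowerColumns_le {c : ℕ} (h : Fin c → ℤ) (E : Finset (Fin c)) (j : Fin c) :
    lowerColumns h E j ≤ h j := by
  unfold lowerColumns
  split_ifs <;> omega

theorem le_lowerColumns {c : ℕ} (h : Fin c → ℤ) (E : Finset (Fin c)) (j : Fin c) :
    h j - 1 ≤ lowerColumns h E j := by
  unfold lowerColumns
  split_ifs <;> omega

open Classical in
theorem IsPartialSSYT.truncate {b c n : ℕ} {h : Fin c → ℤ} {T : Fin b → Fin c → ℕ}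
    (hle : ∀ j, h j ≤ b) (hT : IsPartialSSYT (n + 1) h T) :
    IsPartialSSYT n (lowerColumns h {j | ∃ i, T i j = n}) fun i j => min (T i j) n := by
  obtain ⟨⟨hanti, hnonneg⟩, hbound, hshape, hrow, hcol⟩ := hT
  have hshape' : ∀ i j, min (T i j) n < n ↔
      (i : ℤ) < lowerColumns h {j | ∃ i, T i j = n} j := by
    intro i j
    simp only [min_lt_iff, lt_irrefl, or_false]
    by_cases hj : ∃ i, T i j = n
    · have hE : lowerColumns h {j | ∃ i, T i j = n} j = h j - 1 := by simp [lowerColumns, hj]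
      obtain ⟨i₀, hi₀⟩ := hj
      have h₀ : (i₀ : ℤ) < h j := (hshape i₀ j).1 (by omega)
      have h₁ : h j = i₀ + 1 := by
        by_contra hne
        have hb := hle j
        have hlt : (i₀ : ℕ) + 1 < b := by omega
        have h₂ := hcol i₀ ⟨i₀ + 1, hlt⟩ j (Fin.lt_def.2 (Nat.lt_succ_self _)) (by omega)
        have h₃ := (hshape ⟨i₀ + 1, hlt⟩ j).2 (by push_cast; omega)
        omega
      rw [hE, h₁, add_sub_cancel_right, Nat.cast_lt, ← Fin.lt_def]
      constructor
      · intro hi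
        rcases lt_trichotomy i i₀ with hlt | rfl | hgt
        · exact hlt
        · omega
        · have := hcol i₀ i j hgt (by omega)
          omega
      · intro hi
        have := hcol i i₀ j hi ((hshape i j).2 (by rw [Fin.lt_def] at hi; omega))
        omega
    · have hE : lowerColumns h {j | ∃ i, T i j = n} j = h j := by simp [lowerColumns, hj]
      rw [hE, ← hshape i j]
      have : T i j ≠ n := fun hi => hj ⟨i, hi⟩
      omega
  have hnonneg' : ∀ j, 0 ≤ lowerColumns h {j | ∃ i, T i j = n} j := by
    intro j
    by_cases hj : ∃ i, T i j = n
    · obtain ⟨i₀, hi₀⟩ := hj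
      have h₀ : (i₀ : ℤ) < h j := (hshape i₀ j).1 (by omega)
      have := le_lowerColumns h {j | ∃ i, T i j = n} j
      omega
    · simpa [lowerColumns, hj] using hnonneg j
  refine ⟨⟨fun j j' hjj => ?_, hnonneg'⟩, fun i j => min_le_right _ _, hshape',
    fun i j j' hjj => min_le_min_right _ (hrow i j j' hjj), fun i i' j hii hlt => ?_⟩
  · by_contra! hlt
    have h₀ := hnonneg' j
    have h₁ := (lowerColumns_le h {j | ∃ i, T i j = n} j').trans (hle j')
    obtain ⟨m, hm⟩ := Int.eq_ofNat_of_zero_le h₀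
    have hmb : m < b := by omega
    have h₂ := (hshape' ⟨m, hmb⟩ j').2 (by rw [← hm]; exact hlt)
    have h₃ := (hshape' ⟨m, hmb⟩ j).1
      (lt_of_le_of_lt (min_le_min_right _ (hrow _ j j' hjj)) h₂)
    simp only [hm] at h₃
    omega
  · have := hcol i i' j hii
    dsimp only at hlt ⊢
    omega

theorem IsPartialSSYT.extend {b c n : ℕ} {h : Fin c → ℤ} (hanti : Antitone h)
    (hnonneg : ∀ j, 0 ≤ h j) {E : Finset (Fin c)} {T : Fin b → Fin c → ℕ}
    (hT : IsPartialSSYT n (lowerColumns h E) T) :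
    IsPartialSSYT (n + 1) h fun i j => if (i : ℤ) < h j then T i j else n + 1 := by
  obtain ⟨-, hbound, hshape, hrow, hcol⟩ := hT
  refine ⟨⟨hanti, hnonneg⟩, fun i j => ?_, fun i j => ?_, fun i j j' hjj => ?_,
    fun i i' j hii => ?_⟩
  · have := hbound i j
    dsimp only
    split_ifs <;> omega
  · have := hbound i j
    dsimp only
    split_ifs <;> omega
  · have h₁ := hbound i j
    have h₂ := hrow i j j' hjj
    have h₃ := hanti hjj
    dsimp only
    split_ifs <;> omega
  · have h₁ := hcol i i' j hii
    have h₂ := (hshape i j).2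
    have h₃ := le_lowerColumns h E j
    have h₄ := hbound i j
    rw [Fin.lt_def] at hii
    dsimp only
    split_ifs with h₅ h₆
    · exact fun _ => h₁ (h₂ (by omega))
    all_goals omega

open Classical in
theorem card_partialSSYT_succ {b c : ℕ} (n : ℕ) {h : Fin c → ℤ} (hanti : Antitone h)
    (hnonneg : ∀ j, 0 ≤ h j) (hle : ∀ j, h j ≤ b) :
    (partialSSYT b (n + 1) h).card =
      ∑ E : Finset (Fin c), (partialSSYT b n (lowerColumns h E)).card := by
  rw [← Finset.card_sigma]
  refine Finset.card_bij'
    (fun T _ => ⟨({j | ∃ i, T i j = n} : Finset (Fin c)), fun i j => min (T i j) n⟩)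
    (fun p _ => fun i j => if (i : ℤ) < h j then p.2 i j else n + 1)
    (fun T hT => ?_) (fun p hp => ?_) (fun T hT => ?_) (fun p hp => ?_)
  · rw [Finset.mem_sigma]
    exact ⟨Finset.mem_univ _, mem_partialSSYT.2 ((mem_partialSSYT.1 hT).truncate hle)⟩
  · exact mem_partialSSYT.2
      ((mem_partialSSYT.1 (Finset.mem_sigma.1 hp).2).extend hanti hnonneg)
  · obtain ⟨-, hbound, hshape, -⟩ := mem_partialSSYT.1 hT
    ext i j
    have h₁ := hbound i j
    have h₂ := hshape i j
    dsimp only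
    split_ifs <;> omega
  · obtain ⟨E, T⟩ := p
    obtain ⟨⟨-, hnonneg'⟩, hbound, hshape, -⟩ := mem_partialSSYT.1 (Finset.mem_sigma.1 hp).2
    dsimp only at hnonneg' hbound hshape ⊢
    rw [Sigma.mk.injEq, heq_eq_eq]
    constructor
    · ext j
      have h₀ := hnonneg' j
      simp only [Finset.mem_filter, Finset.mem_univ, true_and]
      constructor
      · rintro ⟨i, hi⟩
        by_contra hj
        have h₁ := hshape i j
        rw [lowerColumns, if_neg hj] at h₁
        split_ifs at hi <;> omega
      · intro hj
        rw [lowerColumns, if_pos hj] at h₀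
        obtain ⟨m, hm⟩ := Int.eq_ofNat_of_zero_le h₀
        have hb := hle j
        refine ⟨⟨m, by omega⟩, ?_⟩
        have h₁ := hshape ⟨m, by omega⟩ j
        have h₂ := hbound ⟨m, by omega⟩ j
        rw [lowerColumns, if_pos hj] at h₁
        dsimp only at h₁ ⊢
        rw [if_pos (by omega)]
        omega
    · ext i j
      have h₁ := hshape i j
      have h₂ := hbound i j
      have h₃ := lowerColumns_le h E j
      split_ifs <;> omega

theorem card_partialSSYT {b c : ℕ} (n : ℕ) {h : Fin c → ℤ} (hanti : Antitone h)
    (hnonneg : ∀ j, 0 ≤ h j) (hle : ∀ j, h j ≤ b) :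
    ((partialSSYT b n h).card : ℤ) = columnDet n h := by
  induction n generalizing h with
  | zero =>
    rw [columnDet_zero_left hanti hnonneg]
    split_ifs with h0
    · subst h0
      have : partialSSYT b 0 (0 : Fin c → ℤ) = {fun _ _ => 0} := by
        ext T
        rw [mem_partialSSYT, Finset.mem_singleton]
        constructor
        · rintro ⟨-, hbound, -⟩
          ext i j
          exact Nat.le_zero.1 (hbound i j)
        · rintro rfl
          refine ⟨⟨hanti, hnonneg⟩, ?_, ?_, ?_, ?_⟩ <;> simp
      simp [this]
    · have : partialSSYT b 0 h = ∅ := by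
        refine Finset.eq_empty_of_forall_notMem fun T hT => h0 (funext fun j => ?_)
        obtain ⟨-, -, hshape, -⟩ := mem_partialSSYT.1 hT
        refine le_antisymm ?_ (hnonneg j)
        by_contra! hpos
        have hb := hle j
        simp only [Pi.zero_apply] at hpos
        have := (hshape ⟨0, by omega⟩ j).2 (by simpa using hpos)
        omega
      simp [this]
  | succ n ih =>
    rw [card_partialSSYT_succ n hanti hnonneg hle, columnDet_succ, Nat.cast_sum]
    refine Finset.sum_congr rfl fun E _ => ?_
    by_cases hgood : Antitone (lowerColumns h E) ∧ ∀ j, 0 ≤ lowerColumns h E j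
    · exact ih hgood.1 hgood.2 fun j => (lowerColumns_le h E j).trans (hle j)
    · rw [columnDet_lowerColumns_eq_zero n hanti hnonneg E hgood, Nat.cast_eq_zero,
        Finset.card_eq_zero]
      exact Finset.eq_empty_of_forall_notMem fun T hT => hgood (mem_partialSSYT.1 hT).1

theorem NSSYT_eq_columnDet (a b c : ℕ) :
    (NSSYT a b c : ℤ) = columnDet (a + b) (fun _ : Fin c => (b : ℤ)) := by
  rw [← card_partialSSYT (b := b) (a + b) antitone_const (fun _ => Int.natCast_nonneg b)
    (fun _ => le_rfl), NSSYT, Nat.cast_inj]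
  refine Finset.card_bij (fun T _ i j => (T i j : ℕ)) (fun T hT => ?_) (fun T _ T' _ hTT => ?_)
    (fun T hT => ?_)
  · obtain ⟨hrow, hcol⟩ := (Finset.mem_filter.1 hT).2
    exact mem_partialSSYT.2 ⟨⟨antitone_const, fun _ => Int.natCast_nonneg b⟩,
      fun i j => (T i j).is_lt.le, fun i j => by simp, hrow, fun i i' j hii _ => hcol i i' j hii⟩
  · ext i j
    exact congrFun (congrFun hTT i) j
  · obtain ⟨-, -, hshape, hrow, hcol⟩ := mem_partialSSYT.1 hT
    have hlt : ∀ i j, T i j < a + b := fun i j => (hshape i j).2 (by simp)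
    exact ⟨fun i j => ⟨T i j, hlt i j⟩, Finset.mem_filter.2 ⟨Finset.mem_univ _, hrow,
      fun i i' j hii => hcol i i' j hii (hlt i j)⟩, rfl⟩

open Polynomial in
theorem prod_sub_mul_det_piecewise {K : Type*} [Field K] {b c : ℕ} (x : Fin (b + c) → K)
    {I : Finset (Fin (b + c))} (hI : I.card = c) :
    (∏ i ∈ I, ∏ j ∈ Iᶜ, (x i - x j)) *
      Matrix.det (Matrix.of (Iᶜ.piecewise
        (fun i => Fin.append (fun k : Fin b => x i ^ (k : ℕ)) (fun _ : Fin c => 0))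
        (fun i => Fin.append (fun _ : Fin b => 0) (fun k : Fin c => x i ^ (k : ℕ))))) =
      (Matrix.vandermonde x).det := by
  have hIc : Iᶜ.card = b := by
    rw [Finset.card_compl, Fintype.card_fin, hI, Nat.add_sub_cancel]
  have hIcc : Iᶜᶜ.card = c := by rwa [compl_compl]
  set e := finSumEquivOfFinset hIc hIcc
  set f : Fin b ⊕ Fin c ≃ Fin (b + c) := finSumFinEquiv
  have hsubmatrix : ∀ M : Matrix (Fin (b + c)) (Fin (b + c)) K,
      (M.submatrix e f).det = (Equiv.Perm.sign (f.symm.trans e) : ℤ) * M.det := by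
    intro M
    rw [← Matrix.det_permute, ← Matrix.det_submatrix_equiv_self f]
    congr 1
    ext i j
    simp
  have hinl : ∀ p, e (Sum.inl p) ∈ Iᶜ := fun p => Finset.orderEmbOfFin_mem _ hIc p
  have hinr : ∀ q, e (Sum.inr q) ∈ I := fun q => by
    rw [← compl_compl I]
    exact Finset.orderEmbOfFin_mem _ hIcc q
  let r : K[X] := ∏ j ∈ Iᶜ, (X - C (x j))
  have hr : r.Monic := monic_prod_of_monic _ _ fun j _ => monic_X_sub_C _
  have hrdeg : r.natDegree = b := by
    rw [natDegree_prod_of_monic _ _ fun j _ => monic_X_sub_C _]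
    simp [hIc]
  let p : Fin (b + c) → K[X] :=
    Fin.append (fun k : Fin b => X ^ (k : ℕ)) (fun k : Fin c => X ^ (k : ℕ) * r)
  have hp : ∀ j, (p j).Monic ∧ (p j).natDegree = j := by
    intro j
    refine Fin.addCases (fun k => ?_) (fun k => ?_) j
    · simp only [p, Fin.append_left, Fin.val_castAdd]
      exact ⟨monic_X_pow _, natDegree_X_pow _⟩
    · simp only [p, Fin.append_right, Fin.val_natAdd]
      exact ⟨(monic_X_pow _).mul hr, by
        rw [(monic_X_pow _).natDegree_mul hr, natDegree_X_pow, hrdeg, add_comm]⟩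
  rw [Matrix.det_eval_matrixOfPolynomials_eq_det_vandermonde x p (fun j => (hp j).2)
    fun j => (hp j).1]
  have hsign : ((Equiv.Perm.sign (f.symm.trans e) : ℤ) : K) ≠ 0 := by
    rcases Int.units_eq_one_or (Equiv.Perm.sign (f.symm.trans e)) with h | h <;> simp [h]
  refine mul_left_cancel₀ hsign ?_
  rw [mul_left_comm, ← hsubmatrix, ← hsubmatrix]
  set A : Matrix (Fin b) (Fin b) K := Matrix.of fun i k => x (e (Sum.inl i)) ^ (k : ℕ)
  set D : Matrix (Fin c) (Fin c) K := Matrix.of fun i k => x (e (Sum.inr i)) ^ (k : ℕ)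
  have h₁ : (Matrix.of (Iᶜ.piecewise
        (fun i => Fin.append (fun k : Fin b => x i ^ (k : ℕ)) (fun _ : Fin c => 0))
        (fun i => Fin.append (fun _ : Fin b => 0) (fun k : Fin c => x i ^ (k : ℕ))))).submatrix
          e f = Matrix.fromBlocks A 0 0 D := by
    ext (i | i) (k | k)
    · simp [Finset.piecewise, hinl, A, f, -Finset.mem_compl]
    · simp [Finset.piecewise, hinl, f, -Finset.mem_compl]
    · simp [Finset.piecewise, hinr, f]
    · simp [Finset.piecewise, hinr, f, D]
  have h₂ : (Matrix.of fun i j => (p j).eval (x i)).submatrix e f =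
      Matrix.fromBlocks A 0 (Matrix.of fun i k => x (e (Sum.inr i)) ^ (k : ℕ))
        (Matrix.diagonal (fun i => r.eval (x (e (Sum.inr i)))) * D) := by
    ext (i | i) (k | k)
    · simp [p, f, A]
    · have : r.eval (x (e (Sum.inl i))) = 0 := by
        rw [eval_prod]
        exact Finset.prod_eq_zero (hinl i) (by simp)
      simp [p, f, this]
    · simp [p, f]
    · simp [p, f, D, mul_comm]
  have hprod : ∏ i, r.eval (x (e (Sum.inr i))) = ∏ i ∈ I, ∏ j ∈ Iᶜ, (x i - x j) := by
    conv_rhs => rw [← compl_compl I, ← Finset.map_orderEmbOfFin_univ Iᶜᶜ hIcc, Finset.prod_map]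
    refine Finset.prod_congr rfl fun i _ => ?_
    rw [eval_prod]
    simp [e]
  rw [h₁, h₂, Matrix.det_fromBlocks_zero₁₂, Matrix.det_fromBlocks_zero₁₂, Matrix.det_mul,
    Matrix.det_diagonal, hprod]
  ring

theorem det_piecewise_eq_zero {K : Type*} [Field K] {b c : ℕ} (u v : Fin (b + c) → ℕ → K)
    {I : Finset (Fin (b + c))} (hI : I.card ≠ c) :
    Matrix.det (Matrix.of (Iᶜ.piecewise
        (fun i => Fin.append (fun k : Fin b => u i k) (fun _ : Fin c => 0))
        (fun i => Fin.append (fun _ : Fin b => 0) (fun k : Fin c => v i k)))) = 0 := by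
  rw [Matrix.det_apply']
  refine Finset.sum_eq_zero fun σ _ => ?_
  suffices h : ∃ j, Iᶜ.piecewise
        (fun i => Fin.append (fun k : Fin b => u i k) (fun _ : Fin c => 0))
        (fun i => Fin.append (fun _ : Fin b => 0) (fun k : Fin c => v i k)) (σ j) j = 0 by
    obtain ⟨j, hj⟩ := h
    exact mul_eq_zero_of_right _ (Finset.prod_eq_zero (Finset.mem_univ j) hj)
  by_contra! hne
  refine hI ?_
  have himage : I = Finset.univ.map ((Fin.natAddEmb b : Fin c ↪ Fin (b + c)).trans σ.toEmbedding) := by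
    ext i
    obtain ⟨j, rfl⟩ := σ.surjective i
    have := hne j
    revert this
    refine Fin.addCases (fun k => ?_) (fun k => ?_) j
    · by_cases hk : σ (Fin.castAdd c k) ∈ I <;>
        simp [Finset.piecewise, hk, Fin.ext_iff]
      intros; omega
    · by_cases hk : σ (Fin.natAdd b k) ∈ I <;>
        simp [Finset.piecewise, hk]
  rw [himage, Finset.card_map, Finset.card_univ, Fintype.card_fin]

theorem det_append_smul_vandermonde {K : Type*} [Field K] {b c : ℕ} (x g : Fin (b + c) → K)
    (hx : Function.Injective x) :
    Matrix.det (Matrix.of fun i => Fin.append (fun k : Fin b => x i ^ (k : ℕ))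
        (fun k : Fin c => g i * x i ^ (k : ℕ))) =
      (Matrix.vandermonde x).det *
        ∑ I ∈ Finset.powersetCard c (Finset.univ : Finset (Fin (b + c))),
          (∏ i ∈ I, g i) / ∏ i ∈ I, ∏ j ∈ Iᶜ, (x i - x j) := by
  set u : Fin (b + c) → Fin (b + c) → K :=
    fun i => Fin.append (fun k : Fin b => x i ^ (k : ℕ)) (fun _ : Fin c => 0)
  set v : Fin (b + c) → Fin (b + c) → K :=
    fun i => Fin.append (fun _ : Fin b => 0) (fun k : Fin c => x i ^ (k : ℕ))
  set Δ := (Matrix.detRowAlternating (n := Fin (b + c)) (R := K)).toMultilinearMap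
  have hrow : (Matrix.of fun i => Fin.append (fun k : Fin b => x i ^ (k : ℕ))
        (fun k : Fin c => g i * x i ^ (k : ℕ))).det = Δ ((fun i => g i • v i) + u) := by
    refine congrArg Matrix.det ?_
    ext i j
    refine Fin.addCases (fun k => ?_) (fun k => ?_) j <;> simp [u, v]
  have hterm : ∀ I : Finset (Fin (b + c)), Δ (I.piecewise (fun i => g i • v i) u) =
      (∏ i ∈ I, g i) * (Matrix.of (Iᶜ.piecewise u v)).det := by
    intro I
    have := Δ.map_piecewise_smul g (Iᶜ.piecewise u v) I
    rw [smul_eq_mul] at this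
    refine Eq.trans (congrArg Δ ?_) this
    ext i j
    by_cases hi : i ∈ I <;> simp [Finset.piecewise, hi]
  rw [hrow, Δ.map_add_univ, Finset.mul_sum,
    ← Finset.sum_subset (Finset.subset_univ (Finset.powersetCard c Finset.univ))]
  · refine Finset.sum_congr rfl fun I hI => ?_
    have hne : ∏ i ∈ I, ∏ j ∈ Iᶜ, (x i - x j) ≠ 0 := by
      refine Finset.prod_ne_zero_iff.2 fun i hi => Finset.prod_ne_zero_iff.2 fun j hj => ?_
      refine sub_ne_zero.2 fun hij => Finset.mem_compl.1 hj ?_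
      rwa [← hx hij]
    rw [hterm, ← prod_sub_mul_det_piecewise x (Finset.mem_powersetCard.1 hI).2]
    field_simp
    rfl
  · intro I _ hI
    rw [hterm]
    have := det_piecewise_eq_zero (fun i k => x i ^ k) (fun i k => x i ^ k)
      (I := I) (b := b) (c := c) fun h => hI (Finset.mem_powersetCard.2 ⟨Finset.subset_univ _, h⟩)
    rw [this, mul_zero]

open Polynomial Filter Topology in
theorem tendsto_det_eval_div_det_vandermonde {n : ℕ} (f : Fin n → ℂ[X]) {y : Fin n → ℂ}
    (hy : Function.Injective y) :
    Tendsto (fun ε : ℂ => (Matrix.of fun i j => (f j).eval (ε * y i)).det /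
        (Matrix.vandermonde fun i => ε * y i).det) (𝓝[≠] 0)
      (𝓝 (Matrix.of fun m j : Fin n => (f j).coeff m).det) := by
  have hR : ∀ j, ∃ R : ℂ[X], f j = ∑ m : Fin n, C ((f j).coeff m) * X ^ (m : ℕ) + X ^ n * R := by
    intro j
    have hdvd : X ^ n ∣ f j - ∑ m : Fin n, C ((f j).coeff m) * X ^ (m : ℕ) := by
      rw [X_pow_dvd_iff]
      intro d hd
      simp only [coeff_sub, finsetSum_coeff, coeff_C_mul_X_pow]
      rw [Finset.sum_eq_single ⟨d, hd⟩, if_pos rfl, sub_self]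
      · exact fun m _ hm => if_neg fun h => hm (Fin.ext h.symm)
      · exact fun h => absurd (Finset.mem_univ _) h
    obtain ⟨R, hR⟩ := hdvd
    exact ⟨R, by rw [← hR]; ring⟩
  choose R hR using hR
  set Y := Matrix.vandermonde y
  have hY : Y.det ≠ 0 := Matrix.det_vandermonde_ne_zero_iff.2 hy
  have hYunit : IsUnit Y.det := hY.isUnit
  set A : Matrix (Fin n) (Fin n) ℂ := Matrix.of fun m j => (f j).coeff m
  let Z : ℂ → Matrix (Fin n) (Fin n) ℂ :=
    fun ε => Matrix.of fun i j => y i ^ n * (R j).eval (ε * y i)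
  let E : ℂ → Matrix (Fin n) (Fin n) ℂ := fun ε => Matrix.diagonal fun m => ε ^ (m : ℕ)
  let E' : ℂ → Matrix (Fin n) (Fin n) ℂ :=
    fun ε => Matrix.diagonal fun m => ε ^ (n - 1 - (m : ℕ))
  let B : ℂ → Matrix (Fin n) (Fin n) ℂ := fun ε => A + ε • (E' ε * (Y⁻¹ * Z ε))
  have hV : ∀ ε, (Matrix.vandermonde fun i => ε * y i) = Y * E ε := by
    intro ε
    ext i m
    simp [Y, E, Matrix.vandermonde_apply, mul_pow, mul_comm]
  have hEE' : ∀ ε, ε • (E ε * E' ε) = ε ^ n • (1 : Matrix (Fin n) (Fin n) ℂ) := by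
    intro ε
    rw [Matrix.diagonal_mul_diagonal, ← Matrix.diagonal_one, ← Matrix.diagonal_smul,
      ← Matrix.diagonal_smul]
    congr 1
    ext m
    simp only [Pi.smul_apply, smul_eq_mul, mul_one]
    rw [← pow_add, ← pow_succ']
    congr 1
    omega
  have hfactor : ∀ ε, (Matrix.of fun i j => (f j).eval (ε * y i)) = Y * E ε * B ε := by
    intro ε
    have hsplit : Y * E ε * B ε = Y * E ε * A + ε ^ n • Z ε := by
      calc Y * E ε * B ε = Y * E ε * A + Y * (ε • (E ε * E' ε)) * (Y⁻¹ * Z ε) := by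
            simp only [B, mul_add, Matrix.mul_smul, Matrix.smul_mul, Matrix.mul_assoc]
        _ = _ := by
            rw [hEE', Matrix.mul_smul, Matrix.smul_mul, Matrix.mul_one, ← Matrix.mul_assoc,
              Matrix.mul_nonsing_inv _ hYunit, Matrix.one_mul]
    rw [hsplit, ← hV]
    ext i j
    rw [Matrix.of_apply, hR j]
    simp only [eval_add, eval_finsetSum, eval_mul, eval_C, eval_pow, eval_X, Matrix.add_apply,
      Matrix.mul_apply, Matrix.vandermonde_apply, Matrix.smul_apply, smul_eq_mul, A, Z,
      Matrix.of_apply]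
    rw [mul_pow ε (y i) n, mul_assoc]
    congr 1
    exact Finset.sum_congr rfl fun m _ => mul_comm _ _
  have hcont : Continuous fun ε => (B ε).det := by
    refine Continuous.matrix_det ?_
    refine continuous_const.add (continuous_id.smul (Continuous.matrix_mul ?_
      (continuous_const.matrix_mul ?_)))
    · exact Continuous.matrix_diagonal (continuous_pi fun m => continuous_pow _)
    · refine continuous_matrix fun i j => ?_
      simp only [Z, Matrix.of_apply]
      fun_prop
  have hB0 : (B 0).det = A.det := by simp [B]
  rw [← hB0]
  refine (hcont.tendsto 0 |>.mono_left nhdsWithin_le_nhds).congr' ?_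
  filter_upwards [self_mem_nhdsWithin] with ε hε
  have hE : (E ε).det ≠ 0 := by
    rw [Matrix.det_diagonal]
    exact Finset.prod_ne_zero_iff.2 fun m _ => pow_ne_zero _ hε
  rw [hfactor, hV, Matrix.det_mul, Matrix.det_mul, mul_div_cancel_left₀ _ (mul_ne_zero hY hE)]

open Polynomial in
theorem det_coeff_append_eq_columnDet (N b c : ℕ) :
    (Matrix.of fun m j : Fin (b + c) => (Fin.append (fun k : Fin b => (X : ℂ[X]) ^ (k : ℕ))
        (fun k : Fin c => (1 + X) ^ N * X ^ (k : ℕ)) j).coeff m).det =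
      (columnDet N fun _ : Fin c => (b : ℤ) : ℂ) := by
  set D : Matrix (Fin c) (Fin c) ℂ :=
    Matrix.of fun i k => ((1 + X : ℂ[X]) ^ N * X ^ (k : ℕ)).coeff (b + i)
  rw [← Matrix.det_submatrix_equiv_self (finSumFinEquiv (m := b) (n := c))]
  have hblocks : (Matrix.of fun m j : Fin (b + c) =>
      (Fin.append (fun k : Fin b => (X : ℂ[X]) ^ (k : ℕ))
        (fun k : Fin c => (1 + X) ^ N * X ^ (k : ℕ)) j).coeff m).submatrix
          (finSumFinEquiv (m := b) (n := c)) (finSumFinEquiv (m := b) (n := c)) =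
      Matrix.fromBlocks 1 (Matrix.of fun i k => ((1 + X : ℂ[X]) ^ N * X ^ (k : ℕ)).coeff i)
        0 D := by
    ext (i | i) (k | k)
    · simp [coeff_X_pow, Matrix.one_apply, Fin.ext_iff]
    · simp
    · have : b + (i : ℕ) ≠ k := by omega
      simp [coeff_X_pow, this]
    · simp [D]
  rw [hblocks, Matrix.det_fromBlocks_zero₂₁, Matrix.det_one, one_mul, columnDet,
    ← Matrix.det_transpose D, Int.cast_det]
  congr 1
  ext k i
  simp only [D, Matrix.transpose_apply, Matrix.of_apply, Matrix.map_apply, intChoose,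
    coeff_mul_X_pow', coeff_one_add_X_pow]
  by_cases hk : (k : ℕ) ≤ b + i
  · have h₁ : ((b : ℤ) - k + i).toNat = b + i - k := by omega
    rw [if_pos hk, if_pos (by omega), h₁]
    simp
  · rw [if_neg hk, if_neg (by omega), Int.cast_zero]

open Polynomial Filter Topology in
theorem tendsto_sum_powersetCard_NSSYT (a b c : ℕ) :
    Tendsto (fun ε : ℂ => ∑ I ∈ Finset.powersetCard c (Finset.univ : Finset (Fin (b + c))),
        (∏ i ∈ I, (1 + ε * (i : ℕ)) ^ (a + b)) /
          ∏ i ∈ I, ∏ j ∈ Iᶜ, (ε * (i : ℕ) - ε * (j : ℕ))) (𝓝[≠] 0) (𝓝 (NSSYT a b c : ℂ)) := by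
  have hy : Function.Injective fun i : Fin (b + c) => ((i : ℕ) : ℂ) :=
    Nat.cast_injective.comp Fin.val_injective
  have hlim := tendsto_det_eval_div_det_vandermonde
    (Fin.append (fun k : Fin b => (X : ℂ[X]) ^ (k : ℕ))
      (fun k : Fin c => (1 + X) ^ (a + b) * X ^ (k : ℕ))) hy
  rw [det_coeff_append_eq_columnDet, ← NSSYT_eq_columnDet, Int.cast_natCast] at hlim
  refine hlim.congr' ?_
  filter_upwards [self_mem_nhdsWithin] with ε hε
  have hεy : Function.Injective fun i : Fin (b + c) => ε * ((i : ℕ) : ℂ) :=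
    fun i j hij => hy (mul_left_cancel₀ hε hij)
  rw [div_eq_iff (Matrix.det_vandermonde_ne_zero_iff.2 hεy), mul_comm,
    ← det_append_smul_vandermonde _
      (fun i : Fin (b + c) => (1 + ε * ((i : ℕ) : ℂ)) ^ (a + b)) hεy]
  congr 1
  ext i j
  refine Fin.addCases (fun k => ?_) (fun k => ?_) j <;> simp

/-- The behaviour of `Phi` under the Möbius transformation sending `β` to infinity and `γ` to
zero. -/
theorem Phi_const_of_moebius (a b c : ℕ) {α w s : Fin (b + c) → ℂ} {β γ κ η : ℂ}
    (hη : η ≠ 0) (hw : ∀ i, w i ≠ 0) (hαβ : ∀ i, α i - β = w i) (hαγ : ∀ i, α i - γ = κ * s i * w i)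
    (hαα : ∀ i j, α i - α j = η * w i * w j * (s i - s j)) :
    Phi a b c α (fun _ => β) (fun _ => γ) =
      (∏ i, w i) ^ a * κ ^ (c * (a + b)) / η ^ (b * c) *
        ∑ I ∈ Finset.powersetCard c (Finset.univ : Finset (Fin (b + c))),
          (∏ i ∈ I, s i ^ (a + b)) / ∏ i ∈ I, ∏ j ∈ Iᶜ, (s i - s j) := by
  rw [Phi, Finset.mul_sum]
  refine Finset.sum_congr rfl fun I hI => ?_
  have hIcard := (Finset.mem_powersetCard.1 hI).2
  have hIc : Iᶜ.card = b := by
    rw [Finset.card_compl, Fintype.card_fin, hIcard, Nat.add_sub_cancel]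
  have hwI : ∏ i ∈ I, w i ≠ 0 := Finset.prod_ne_zero_iff.2 fun i _ => hw i
  have hwIc : ∏ i ∈ Iᶜ, w i ≠ 0 := Finset.prod_ne_zero_iff.2 fun i _ => hw i
  simp only [hαβ, hαγ, hαα, Finset.prod_const, Finset.card_univ, Fintype.card_fin,
    Finset.prod_mul_distrib, Finset.prod_pow, hIcard, hIc]
  rw [← Finset.prod_mul_prod_compl I w]
  generalize ∏ i ∈ I, w i = u at *
  generalize ∏ i ∈ Iᶜ, w i = v at *
  generalize ∏ i ∈ I, ∏ j ∈ Iᶜ, (s i - s j) = D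
  rcases eq_or_ne D 0 with rfl | hD
  · simp
  · field_simp
    ring

theorem IsPolyFun.continuousAt {a b c : ℕ}
    {P : (Fin (b + c) → ℂ) → (Fin (a + c) → ℂ) → (Fin (a + b) → ℂ) → ℂ}
    (hP : IsPolyFun a b c P) {X : Type*} [TopologicalSpace X]
    {α : X → Fin (b + c) → ℂ} {β : X → Fin (a + c) → ℂ} {γ : X → Fin (a + b) → ℂ} {x : X}
    (hα : ContinuousAt α x) (hβ : ContinuousAt β x) (hγ : ContinuousAt γ x) :
    ContinuousAt (fun y => P (α y) (β y) (γ y)) x := by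
  obtain ⟨p, hp⟩ := hP
  simp only [hp]
  refine (MvPolynomial.continuous_eval p).continuousAt.comp (continuousAt_pi.2 ?_)
  rintro (i | i | i)
  · exact continuousAt_pi.1 hα i
  · exact continuousAt_pi.1 hβ i
  · exact continuousAt_pi.1 hγ i

open Filter Topology in
theorem Phi_fully_homogeneous_of_ne (a b c : ℕ)
    (P : (Fin (b + c) → ℂ) → (Fin (a + c) → ℂ) → (Fin (a + b) → ℂ) → ℂ)
    (hP : IsPolyFun a b c P)
    (hagree : ∀ α β γ, Function.Injective α → P α β γ = Phi a b c α β γ)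
    {α β γ : ℂ} (hαβ : α ≠ β) (hαγ : α ≠ γ) (hβγ : β ≠ γ) :
    P (fun _ => α) (fun _ => β) (fun _ => γ) =
      (NSSYT a b c : ℂ) * (α - β) ^ (a * b) * (γ - β) ^ (b * c) * (α - γ) ^ (c * a) := by
  have hu : α - β ≠ 0 := sub_ne_zero.2 hαβ
  have hv : α - γ ≠ 0 := sub_ne_zero.2 hαγ
  have hδ : γ - β ≠ 0 := sub_ne_zero.2 hβγ.symm
  set κ := (α - γ) / (α - β) with hκdef
  have hκ : κ ≠ 0 := div_ne_zero hv hu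
  set d : ℂ → Fin (b + c) → ℂ := fun ε i => 1 - κ * (1 + ε * (i : ℕ))
  have hd0 : ∀ i, d 0 i = (γ - β) / (α - β) := by
    intro i
    simp only [d, hκdef]
    field_simp
    ring
  have hd0' : ∀ i, d 0 i ≠ 0 := fun i => by rw [hd0]; exact div_ne_zero hδ hu
  have hdcont : ∀ i, Continuous fun ε => d ε i := fun i => by fun_prop
  set w : ℂ → Fin (b + c) → ℂ := fun ε i => (γ - β) / d ε i
  have hw0 : ∀ i, w 0 i = α - β := by
    intro i
    simp only [w, hd0]
    field_simp
  have hwcont : ∀ i, ContinuousAt (fun ε => w ε i) 0 := fun i =>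
    continuousAt_const.div (hdcont i).continuousAt (hd0' i)
  have hleft : Tendsto (fun ε => P (fun i => β + w ε i) (fun _ => β) (fun _ => γ)) (𝓝[≠] 0)
      (𝓝 (P (fun _ => α) (fun _ => β) (fun _ => γ))) := by
    have := hP.continuousAt (α := fun ε i => β + w ε i) (β := fun _ _ => β) (γ := fun _ _ => γ)
      (x := (0 : ℂ)) (continuousAt_pi.2 fun i => continuousAt_const.add (hwcont i))
      continuousAt_const continuousAt_const
    simpa only [ContinuousAt, hw0, add_sub_cancel] using this.tendsto.mono_left nhdsWithin_le_nhds
  have hright : Tendsto (fun ε => (∏ i, w ε i) ^ a * κ ^ (c * (a + b)) / (κ / (γ - β)) ^ (b * c) *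
      ∑ I ∈ Finset.powersetCard c (Finset.univ : Finset (Fin (b + c))),
        (∏ i ∈ I, (1 + ε * (i : ℕ)) ^ (a + b)) /
          ∏ i ∈ I, ∏ j ∈ Iᶜ, (ε * (i : ℕ) - ε * (j : ℕ))) (𝓝[≠] 0)
      (𝓝 ((∏ i, w 0 i) ^ a * κ ^ (c * (a + b)) / (κ / (γ - β)) ^ (b * c) * NSSYT a b c)) := by
    refine Tendsto.mul ?_ (tendsto_sum_powersetCard_NSSYT a b c)
    refine (((Tendsto.pow ?_ a).mul_const _).div_const _)
    exact tendsto_finsetProd _ fun i _ => (hwcont i).tendsto.mono_left nhdsWithin_le_nhds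
  have hev : ∀ᶠ ε in 𝓝[≠] (0 : ℂ), ∀ i, d ε i ≠ 0 :=
    eventually_all.2 fun i =>
      ((hdcont i).continuousAt.eventually_ne (hd0' i)).filter_mono nhdsWithin_le_nhds
  have heq := tendsto_nhds_unique (hright.congr' ?_) hleft
  · rw [← heq]
    simp only [hw0, Finset.prod_const, Finset.card_univ, Fintype.card_fin, hκdef, div_pow]
    field_simp
    ring
  filter_upwards [hev, self_mem_nhdsWithin] with ε hd hε
  have hw : ∀ i, w ε i ≠ 0 := fun i => div_ne_zero hδ (hd i)
  have hαα : ∀ i j : Fin (b + c), β + w ε i - (β + w ε j) =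
      κ / (γ - β) * w ε i * w ε j * ((1 + ε * (i : ℕ)) - (1 + ε * (j : ℕ))) := by
    intro i j
    have hi := hd i
    have hj := hd j
    simp only [w]
    field_simp
    simp only [d]
    ring
  have hinj : Function.Injective fun i => β + w ε i := by
    intro i j hij
    have h := hαα i j
    rw [sub_eq_zero.2 hij, eq_comm, mul_eq_zero, or_iff_right (mul_ne_zero (mul_ne_zero
      (div_ne_zero hκ hδ) (hw i)) (hw j)), add_sub_add_left_eq_sub, sub_eq_zero] at h
    exact Fin.ext (Nat.cast_injective (mul_left_cancel₀ hε h))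
  rw [hagree _ _ _ hinj, Phi_const_of_moebius a b c (κ := κ) (s := fun i => 1 + ε * (i : ℕ))
    (div_ne_zero hκ hδ) hw
    (fun i => add_sub_cancel_left _ _) (fun i => ?_) hαα]
  · simp only [add_sub_add_left_eq_sub]
  · have hi := hd i
    simp only [w]
    field_simp
    simp only [d]
    ring

/-- With all three families of spectral parameters constant, any polynomial extension `P`
of `Φ_{a,b,c}` factorizes as `N_{a,b,c} · (α-β)^{ab} · (γ-β)^{bc} · (α-γ)^{ca}`. -/
theorem Phi_fully_homogeneous (a b c : ℕ)
    (P : (Fin (b + c) → ℂ) → (Fin (a + c) → ℂ) → (Fin (a + b) → ℂ) → ℂ)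
    (hP : IsPolyFun a b c P)
    (hagree : ∀ α β γ, Function.Injective α → P α β γ = Phi a b c α β γ)
    (α β γ : ℂ) :
    P (fun _ => α) (fun _ => β) (fun _ => γ) =
      (NSSYT a b c : ℂ) * (α - β) ^ (a * b) * (γ - β) ^ (b * c) * (α - γ) ^ (c * a) := by
  have hleft := hP.continuousAt (α := fun _ _ => α) (β := fun ε _ => β + ε)
    (γ := fun ε _ => γ + 2 * ε) (x := (0 : ℂ)) continuousAt_const (by fun_prop) (by fun_prop)
  have hright : ContinuousAt (fun ε : ℂ => (NSSYT a b c : ℂ) * (α - (β + ε)) ^ (a * b) *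
      ((γ + 2 * ε) - (β + ε)) ^ (b * c) * (α - (γ + 2 * ε)) ^ (c * a)) 0 := by fun_prop
  have hne : ∀ u v z : ℂ, v ≠ z → ∀ x : ℂ, ∀ᶠ ε in nhdsWithin (0 : ℂ) {0}ᶜ,
      x + v * ε ≠ u + z * ε := by
    intro u v z hvz x
    have : ∀ᶠ ε in nhdsWithin (0 : ℂ) {0}ᶜ, ε ≠ (u - x) / (v - z) := by
      by_cases h0 : (u - x) / (v - z) = 0
      · rw [h0]
        exact self_mem_nhdsWithin
      · exact (continuousAt_id.eventually_ne (Ne.symm h0)).filter_mono nhdsWithin_le_nhds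
    filter_upwards [this] with ε hε heq
    refine hε ((eq_div_iff (sub_ne_zero.2 hvz)).2 ?_)
    linear_combination heq
  have hlim := tendsto_nhds_unique ((hleft.tendsto.mono_left nhdsWithin_le_nhds).congr' ?_)
    (hright.tendsto.mono_left (nhdsWithin_le_nhds (s := {0}ᶜ)))
  · simpa using hlim
  filter_upwards [hne β 0 1 (by norm_num) α, hne γ 0 2 (by norm_num) α,
    hne γ 1 2 (by norm_num) β] with ε h₁ h₂ h₃
  exact Phi_fully_homogeneous_of_ne a b c P hP hagree (by simpa using h₁) (by simpa using h₂)
    (by simpa using h₃)
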